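/- If x is a point of a quadric Q in ℝ^d such that there exist d linearly independent directions u₁,…,u_d with the entire line {x + t·u_k : t ∈ ℝ} contained in Q for each k, then x is a cone point of Q: for every other point y ∈ Q, the whole line through x and y lies in Q. -/

import Mathlib

open Matrix

/-!
Along a line through `x`, a polynomial `P` of degree at most two satisfies
`P (x + t • v) = (1 - t ^ 2) • P x + t ^ 2 • P (x + v) + (t - t ^ 2) • dPₓ v`. If `x` and `x + v`
are zeros of `P`, the point `x + t • v` is therefore a zero exactly when `(t - t ^ 2) • dPₓ`
vanishes at `v`. This condition is linear in `v`, so it passes from the directions of the given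
lines to everything they span, and it needs no division by `t - t ^ 2`.
-/

section Quadric

variable {R M N ι : Type*} [CommRing R] [AddCommGroup M] [Module R M] [AddCommGroup N] [Module R N]
variable {q : QuadraticMap R M N} {l : M →ₗ[R] N} {c : N} {x : M}

/-- The polynomial map of degree at most two with homogeneous parts `q`, `l` and `c`. The
values lie in a module, so that the zero sets of such maps include intersections of quadrics. -/
def quadraticPolynomial (q : QuadraticMap R M N) (l : M →ₗ[R] N) (c : N) (x : M) : N :=
  q x + l x + c

/-- The differential at `x` of `quadraticPolynomial q l c`, whatever the constant term `c`. -/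
def quadraticPolynomialDifferential (q : QuadraticMap R M N) (l : M →ₗ[R] N) (x : M) : M →ₗ[R] N :=
  q.polarBilin x + l

/-- The zero set of a polynomial map of degree at most two. -/
def quadric (q : QuadraticMap R M N) (l : M →ₗ[R] N) (c : N) : Set M :=
  {x | quadraticPolynomial q l c x = 0}

variable (R) in
/-- A point `x` of `S` is a cone point of `S` if the line through `x` and any `y ∈ S` lies in `S`.
For `y = x` the line degenerates to the point `x`. -/
def IsConePoint (S : Set M) (x : M) : Prop :=
  x ∈ S ∧ ∀ y ∈ S, ∀ t : R, x + t • (y - x) ∈ S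

theorem mem_quadric : x ∈ quadric q l c ↔ quadraticPolynomial q l c x = 0 :=
  Iff.rfl

theorem quadraticPolynomial_add (q : QuadraticMap R M N) (l : M →ₗ[R] N) (c : N) (x v : M) :
    quadraticPolynomial q l c (x + v) =
      quadraticPolynomial q l c x + quadraticPolynomialDifferential q l x v + q v := by
  rw [quadraticPolynomial, quadraticPolynomial, quadraticPolynomialDifferential,
    QuadraticMap.map_add q, LinearMap.map_add, LinearMap.add_apply,
    QuadraticMap.polarBilin_apply_apply]
  abel

theorem quadraticPolynomial_add_smul (q : QuadraticMap R M N) (l : M →ₗ[R] N) (c : N) (x v : M)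
    (t : R) :
    quadraticPolynomial q l c (x + t • v) =
      (1 - t ^ 2) • quadraticPolynomial q l c x + t ^ 2 • quadraticPolynomial q l c (x + v) +
        (t - t ^ 2) • quadraticPolynomialDifferential q l x v := by
  simp only [quadraticPolynomial_add, map_smul, QuadraticMap.map_smul]
  module

theorem add_smul_mem_quadric_iff {v : M} (hx : x ∈ quadric q l c) (hxv : x + v ∈ quadric q l c)
    (t : R) :
    x + t • v ∈ quadric q l c ↔ ((t - t ^ 2) • quadraticPolynomialDifferential q l x) v = 0 := by
  rw [mem_quadric] at hx hxv ⊢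
  rw [quadraticPolynomial_add_smul, hx, hxv, smul_zero, smul_zero, zero_add, zero_add,
    LinearMap.smul_apply]

theorem add_smul_mem_quadric_of_mem_span {s : Set M} {t : R} {v : M} (hx : x ∈ quadric q l c)
    (hs₁ : ∀ u ∈ s, x + u ∈ quadric q l c) (hst : ∀ u ∈ s, x + t • u ∈ quadric q l c)
    (hv : v ∈ Submodule.span R s) (hxv : x + v ∈ quadric q l c) :
    x + t • v ∈ quadric q l c := by
  have hs_ker : s ⊆ LinearMap.ker ((t - t ^ 2) • quadraticPolynomialDifferential q l x) :=
    fun u hu ↦ (add_smul_mem_quadric_iff hx (hs₁ u hu) t).1 (hst u hu)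
  exact (add_smul_mem_quadric_iff hx hxv t).2 (Submodule.span_le.2 hs_ker hv)

theorem cone_point_of_d_rulings_general {u : ι → M} (hx : x ∈ quadric q l c)
    (hu : Submodule.span R (Set.range u) = ⊤)
    (hruled : ∀ (k : ι) (t : R), x + t • u k ∈ quadric q l c) :
    IsConePoint R (quadric q l c) x := by
  refine ⟨hx, fun y hy t ↦ add_smul_mem_quadric_of_mem_span (s := Set.range u) hx ?_ ?_ ?_ ?_⟩
  · rintro _ ⟨k, rfl⟩
    simpa only [one_smul] using hruled k 1
  · rintro _ ⟨k, rfl⟩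
    exact hruled k t
  · exact hu ▸ Submodule.mem_top
  · rwa [add_sub_cancel]

end Quadric

theorem mem_quadric_toQuadraticForm' {R n : Type*} [CommRing R] [Fintype n] [DecidableEq n]
    {Q : Matrix n n R} {l : n → R} {c : R} {x : n → R} :
    x ∈ quadric Q.toQuadraticForm' (dotProductEquiv R n l) c ↔
      x ⬝ᵥ Q.mulVec x + l ⬝ᵥ x + c = 0 := by
  rw [mem_quadric, quadraticPolynomial, Matrix.toQuadraticForm',
    LinearMap.BilinMap.toQuadraticMap_apply, Matrix.toLinearMap₂'_apply',
    dotProductEquiv_apply_apply]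

/-- If a point `x` of a quadric in ℝ^d has `d` linearly independent ruling directions
(lines through `x` contained in the quadric), then `x` is a cone point of the quadric:
for every other point `y` of the quadric, the whole line through `x` and `y` lies in
the quadric. -/
theorem cone_point_of_d_rulings {d : ℕ} (Q : Matrix (Fin d) (Fin d) ℝ)
    (hQsymm : Q.IsSymm) (l : Fin d → ℝ) (c : ℝ)
    (hnontriv : ¬ (Q = 0 ∧ l = 0 ∧ c = 0))
    (x : Fin d → ℝ)
    (hx : x ⬝ᵥ Q.mulVec x + l ⬝ᵥ x + c = 0)
    (u : Fin d → Fin d → ℝ) (hu : LinearIndependent ℝ u)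
    (hruled : ∀ (k : Fin d) (t : ℝ),
      (x + t • u k) ⬝ᵥ Q.mulVec (x + t • u k) + l ⬝ᵥ (x + t • u k) + c = 0) :
    ∀ y : Fin d → ℝ, y ⬝ᵥ Q.mulVec y + l ⬝ᵥ y + c = 0 →
      ∀ t : ℝ, (x + t • (y - x)) ⬝ᵥ Q.mulVec (x + t • (y - x)) +
        l ⬝ᵥ (x + t • (y - x)) + c = 0 := by
  simp only [← mem_quadric_toQuadraticForm'] at hx hruled ⊢
  exact (cone_point_of_d_rulings_general hx (hu.span_eq_top_of_card_eq_finrank' (by simp)) hruled).2
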